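/- arXiv:2212.08721 — 5 statements merged into one kernel-verified Lean document; each statement's English description precedes it below -/
import Mathlib

section
/- Let R be a monotone transit function on a finite nonempty set V. Then R satisfies axiom (uc) if and only if R satisfies both axiom (u) and axiom (w). -/
/-!
If (uc) and (m) hold, `R x y ∪ R y z` is a transit set containing `x` and `z`, hence contains
`R x z`. This triangle inclusion gives (u). It also shows that every point of `R x y ∪ R y z` lies
in at least two of `R x y`, `R y z`, `R x z`. Writing `R x y ∪ R y z = R p q`, both `p` and `q`
therefore lie in a common one of the three, which then contains all of `x`, `y`, `z`: this is (w).

Conversely, two applications of (u) give (m). Let (u) and (w) hold and `z ∈ R p q`. Applying (w)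
to `p`, `q`, `c` shows that `R p q ∪ R z c` is one of `R p q`, `R p c`, `R q c`. If
`z ∈ R x y ∩ R u v`, then `R x y ∪ R u v = R x y ∪ R z u ∪ R z v`, so two such absorptions make it
a transit set.
-/

namespace TransitPaper

variable {V : Type*}

/-- Transit function axioms (t1), (t2), (t3). -/
def IsTransit (R : V → V → Set V) : Prop :=
  (∀ u v, u ∈ R u v) ∧ (∀ u v, R u v = R v u) ∧ (∀ u : V, R u u = {u})

/-- Monotonicity axiom (m). -/
def IsMonotone (R : V → V → Set V) : Prop :=
  ∀ u v p q, p ∈ R u v → q ∈ R u v → R p q ⊆ R u v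

/-- Two sets overlap: A ∩ B, A \ B, B \ A all nonempty. -/
def Ovl (A B : Set V) : Prop :=
  (A ∩ B).Nonempty ∧ (A \ B).Nonempty ∧ (B \ A).Nonempty

/-- The system of transit sets 𝒞_R. -/
def transitSets (R : V → V → Set V) : Set (Set V) :=
  {S | ∃ x y, S = R x y}

/-- S is an interval with respect to the order `lt`. -/
def IsIntervalWrt (lt : V → V → Prop) (S : Set V) : Prop :=
  ∀ x ∈ S, ∀ y ∈ S, ∀ w, lt x w → lt w y → w ∈ S

/-- R is pyramidal: monotone and there is a total order making all transit sets intervals. -/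
def IsPyramidal (R : V → V → Set V) : Prop :=
  IsMonotone R ∧ ∃ lt : V → V → Prop, IsStrictTotalOrder V lt ∧
    ∀ u v, IsIntervalWrt lt (R u v)

def AxUC (R : V → V → Set V) : Prop :=
  ∀ x y u v : V, (R x y ∩ R u v).Nonempty →
    ∃ p ∈ R x y ∪ R u v, ∃ q ∈ R x y ∪ R u v, R x y ∪ R u v = R p q

def AxU (R : V → V → Set V) : Prop :=
  ∀ u v z : V, z ∈ R u v → R u v = R u z ∪ R z v

def AxW (R : V → V → Set V) : Prop :=
  ∀ x y z : V, z ∈ R x y ∨ y ∈ R x z ∨ x ∈ R y z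

def AxWP (R : V → V → Set V) : Prop :=
  ∀ u v x y p q : V, (R u v ∩ R x y).Nonempty → (R u v ∩ R p q).Nonempty →
    (R x y ∩ R p q).Nonempty →
    R p q ⊆ R u v ∪ R x y ∨ R u v ⊆ R p q ∪ R x y ∨ R x y ⊆ R p q ∪ R u v

def AxI (R : V → V → Set V) : Prop :=
  ∀ x y u v p q : V, (R x y ∩ R u v).Nonempty → R x y ∩ R u v ⊆ R p q →
    (R p q \ (R x y ∪ R u v)).Nonempty → R x y ⊆ R p q ∨ R u v ⊆ R p q

def AxO' (R : V → V → Set V) : Prop :=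
  ∀ u v : V, ∀ z ∈ R u v, ∃ p ∈ R u v, ∃ q ∈ R u v, R p z ∪ R z q = R u v

def AxL1 (R : V → V → Set V) : Prop :=
  ∀ x y p q u v : V, Ovl (R x y) (R p q) → Ovl (R p q) (R u v) →
    R x y ⊆ R u v ∨ R u v ⊆ R x y ∨
      (R x y ∩ R u v ⊆ R p q ∧ R p q ⊆ R x y ∪ R u v)

def AxL2 (R : V → V → Set V) : Prop :=
  ∀ x y p q u v : V, Ovl (R x y) (R p q) → Ovl (R p q) (R u v) →
    R x y ∩ R u v = ∅ →
    ∃ s ∈ R x y \ R p q, ∃ t ∈ R u v \ R p q,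
      R x y ∪ R p q ∪ R u v = R s t

def AxN3O (R : V → V → Set V) : Prop :=
  ∀ x y p q u v : V, Ovl (R x y) (R p q) → Ovl (R p q) (R u v) →
    R x y ⊆ R u v ∨ R u v ⊆ R x y ∨ R x y ∩ R u v = ∅

def AxU3 (R : V → V → Set V) : Prop :=
  ∀ x y : V, ¬ R x y ⊆ {x, y} →
    ∃ z ∈ R x y, z ≠ x ∧ z ≠ y ∧ R x z ∪ R z y = R x y

def AxB3 (R : V → V → Set V) : Prop :=
  ∀ u v x y : V, x ∈ R u v → y ∈ R u x → x ∈ R y v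

def AxB4 (R : V → V → Set V) : Prop :=
  ∀ u v x : V, x ∈ R u v → R u x ∩ R x v = {x}

def AxTB (R : V → V → Set V) : Prop :=
  ∀ W : Finset V, 3 ≤ W.card →
    ∃ x ∈ W, ∀ u ∈ W, ∀ v ∈ W, R x u ⊆ R x v ∨ R x v ⊆ R x u

def AxHC (R : V → V → Set V) : Prop :=
  ∀ W : Finset V, 3 ≤ W.card →
    ∃ x ∈ W, ∃ y ∈ W, x ≠ y ∧
      ∀ u ∈ W, ∀ v ∈ W,
        (R x u ⊆ R x v ∨ R x v ⊆ R x u) ∧ (R y u ⊆ R y v ∨ R y v ⊆ R y u)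

def AxTB' (R : V → V → Set V) : Prop :=
  ∀ n : ℕ, 3 ≤ n → ∀ v : ZMod n → V,
    (∀ k : ZMod n, v (k - 1) ∉ R (v k) (v (k + 1)) ∧
      v (k + 1) ∉ R (v (k - 1)) (v k)) →
    ∃ j i : ZMod n, i ≠ j ∧ i ≠ j - 1 ∧ v j ∈ R (v i) (v (i + 1))

def AxP2 (R : V → V → Set V) : Prop :=
  ∀ x y u v p q s t : V,
    Ovl (R x y) (R s t) → Ovl (R u v) (R s t) → Ovl (R p q) (R s t) →
    R x y ⊆ R u v ∪ R p q ∪ R s t ∨ R u v ⊆ R x y ∪ R p q ∪ R s t ∨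
      R p q ⊆ R x y ∪ R u v ∪ R s t

def AxP3 (R : V → V → Set V) : Prop :=
  ∀ x y u v p q s t : V,
    Ovl (R x y) (R u v) → Ovl (R x y) (R p q) → Ovl (R x y) (R s t) →
    R p q ⊆ R u v → R s t ⊆ R u v → (R p q ∩ R s t).Nonempty

def AxP4 (R : V → V → Set V) : Prop :=
  ∀ n : ℕ, 3 ≤ n → ∀ (u v y : V) (x : ℕ → V),
    (∀ i j : ℕ, 1 ≤ i → i ≤ n → 1 ≤ j → j + 1 ≤ n → j ≠ i - 1 → j ≠ i →
      x i ∉ R (x j) (x (j + 1))) →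
    (R u v ∩ R (x 1) (x 2)).Nonempty →
    (R u v ∩ R (x (n - 1)) (x n)).Nonempty →
    (∀ i : ℕ, 1 ≤ i → i + 1 ≤ n → y ∈ R u v \ R (x i) (x (i + 1))) →
    R (x 1) (x 2) ⊆ R u v ∨ R (x (n - 1)) (x n) ⊆ R u v

/-- A weak β-cycle in a set system 𝒞. -/
def HasWeakBetaCycle (𝒞 : Set (Set V)) : Prop :=
  ∃ n : ℕ, 3 ≤ n ∧ ∃ (C : ZMod n → Set V) (x : ZMod n → V),
    (∀ i, C i ∈ 𝒞) ∧ (∀ i, x i ∈ C i ∧ x i ∈ C (i + 1)) ∧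
    (∀ i k : ZMod n, k ≠ i → k ≠ i + 1 → x i ∉ C k)

def TotallyBalanced (𝒞 : Set (Set V)) : Prop := ¬ HasWeakBetaCycle 𝒞

/-- A pure cycle: a weak β-cycle with nonconsecutive sets disjoint. -/
def HasPureCycle (𝒞 : Set (Set V)) : Prop :=
  ∃ n : ℕ, 3 ≤ n ∧ ∃ (C : ZMod n → Set V) (x : ZMod n → V),
    (∀ i, C i ∈ 𝒞) ∧ (∀ i, x i ∈ C i ∧ x i ∈ C (i + 1)) ∧
    (∀ i k : ZMod n, k ≠ i → k ≠ i + 1 → x i ∉ C k) ∧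
    (∀ i j : ZMod n, j ≠ i - 1 → j ≠ i → j ≠ i + 1 → C i ∩ C j = ∅)

def HasGammaTriangle (𝒞 : Set (Set V)) : Prop :=
  ∃ C₁ C₂ C₃ : Set V, C₁ ∈ 𝒞 ∧ C₂ ∈ 𝒞 ∧ C₃ ∈ 𝒞 ∧
    (C₁ ∩ C₂).Nonempty ∧ (C₁ ∩ C₃).Nonempty ∧ (C₂ ∩ C₃).Nonempty ∧
    ∃ u ∈ C₃, ∃ w ∈ C₃, u ∈ C₁ \ C₂ ∧ w ∈ C₂ \ C₁

def GammaAcyclic (𝒞 : Set (Set V)) : Prop :=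
  ¬ HasPureCycle 𝒞 ∧ ¬ HasGammaTriangle 𝒞

def IsHierarchy (𝒞 : Set (Set V)) : Prop :=
  Set.univ ∈ 𝒞 ∧ (∀ x : V, {x} ∈ 𝒞) ∧
    ∀ A ∈ 𝒞, ∀ B ∈ 𝒞, A ∩ B = A ∨ A ∩ B = B ∨ A ∩ B = ∅

def WeakHierarchy (𝒞 : Set (Set V)) : Prop :=
  ∀ A ∈ 𝒞, ∀ B ∈ 𝒞, ∀ C ∈ 𝒞,
    A ∩ B ∩ C = A ∩ B ∨ A ∩ B ∩ C = A ∩ C ∨ A ∩ B ∩ C = B ∩ C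

def AxWPSet (𝒞 : Set (Set V)) : Prop :=
  ∀ A ∈ 𝒞, ∀ B ∈ 𝒞, ∀ C ∈ 𝒞,
    (A ∩ B).Nonempty → (A ∩ C).Nonempty → (B ∩ C).Nonempty →
    A ⊆ B ∪ C ∨ B ⊆ A ∪ C ∨ C ⊆ A ∪ B

def AxISet (𝒞 : Set (Set V)) : Prop :=
  ∀ A ∈ 𝒞, ∀ B ∈ 𝒞, ∀ C ∈ 𝒞,
    (A ∩ B).Nonempty → A ∩ B ⊆ C → (C \ (A ∪ B)).Nonempty →
    A ⊆ C ∨ B ⊆ C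

def AxL1Set (𝒞 : Set (Set V)) : Prop :=
  ∀ A ∈ 𝒞, ∀ B ∈ 𝒞, ∀ C ∈ 𝒞, Ovl A B → Ovl B C →
    A ⊆ C ∨ C ⊆ A ∨ (A ∩ C ⊆ B ∧ B ⊆ A ∪ C)

def AxN3OSet (𝒞 : Set (Set V)) : Prop :=
  ∀ A ∈ 𝒞, ∀ B ∈ 𝒞, ∀ C ∈ 𝒞, Ovl A B → Ovl B C → ¬ Ovl A C

def AxL2'Set (𝒞 : Set (Set V)) : Prop :=
  ∀ A ∈ 𝒞, ∀ B ∈ 𝒞, ∀ C ∈ 𝒞, Ovl A B → Ovl B C → A ∩ C = ∅ →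
    A ∪ B ∪ C ∈ 𝒞

def AxL2''Set (𝒞 : Set (Set V)) : Prop :=
  ∀ A ∈ 𝒞, ∀ B ∈ 𝒞, ∀ C ∈ 𝒞, ∀ D ∈ 𝒞, Ovl A B → Ovl B C → A ∩ C = ∅ →
    (A ∪ C) \ B ⊆ D → A ∪ B ∪ C ⊆ D

section

variable {R : V → V → Set V} {c p q u v z : V}

theorem right_mem (left_mem : ∀ u v, u ∈ R u v) (symm : ∀ u v, R u v = R v u) (u v : V) :
    v ∈ R u v :=
  symm v u ▸ left_mem v u

theorem AxUC.subset_union (huc : AxUC R) (hm : IsMonotone R) (left_mem : ∀ u v, u ∈ R u v)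
    (symm : ∀ u v, R u v = R v u) (x y z : V) : R x z ⊆ R x y ∪ R y z := by
  have right_mem := right_mem left_mem symm
  obtain ⟨p, -, q, -, hpq⟩ := huc x y y z ⟨y, right_mem x y, left_mem y z⟩
  rw [hpq]
  exact hm p q x z (hpq ▸ Or.inl (left_mem x y)) (hpq ▸ Or.inr (right_mem y z))

theorem AxUC.axU (huc : AxUC R) (hm : IsMonotone R) (left_mem : ∀ u v, u ∈ R u v)
    (symm : ∀ u v, R u v = R v u) : AxU R := fun u v z hz =>
  (huc.subset_union hm left_mem symm u z v).antisymm <| Set.union_subset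
    (hm u v u z (left_mem u v) hz) (hm u v z v hz (right_mem left_mem symm u v))

theorem AxUC.axW (huc : AxUC R) (hm : IsMonotone R) (left_mem : ∀ u v, u ∈ R u v)
    (symm : ∀ u v, R u v = R v u) : AxW R := by
  intro x y z
  have right_mem := right_mem left_mem symm
  have triangle := huc.subset_union hm left_mem symm
  obtain ⟨p, hp, q, hq, hpq⟩ := huc x y y z ⟨y, right_mem x y, left_mem y z⟩
  have hx : x ∈ R p q := hpq ▸ Or.inl (left_mem x y)
  have hy : y ∈ R p q := hpq ▸ Or.inl (right_mem x y)
  have hz : z ∈ R p q := hpq ▸ Or.inr (right_mem y z)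
  have mem_two : ∀ w ∈ R x y ∪ R y z,
      (w ∈ R x y ∧ w ∈ R x z) ∨ (w ∈ R x y ∧ w ∈ R y z) ∨ (w ∈ R x z ∧ w ∈ R y z) := by
    rintro w (hw | hw)
    · have : w ∈ R x z ∪ R y z := symm z y ▸ triangle x z y hw
      exact this.imp (⟨hw, ·⟩) (.inl ⟨hw, ·⟩)
    · have : w ∈ R x y ∪ R x z := symm y x ▸ triangle y x z hw
      exact .inr (this.imp (⟨·, hw⟩) (⟨·, hw⟩))
  have common : (p ∈ R x y ∧ q ∈ R x y) ∨ (p ∈ R x z ∧ q ∈ R x z) ∨ (p ∈ R y z ∧ q ∈ R y z) := by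
    have := mem_two p hp
    have := mem_two q hq
    tauto
  exact common.imp (fun h => hm x y p q h.1 h.2 hz) <|
    Or.imp (fun h => hm x z p q h.1 h.2 hy) (fun h => hm y z p q h.1 h.2 hx)

theorem AxU.subset_left (hu : AxU R) (hz : z ∈ R u v) : R u z ⊆ R u v :=
  hu u v z hz ▸ Set.subset_union_left

theorem AxU.subset_right (hu : AxU R) (hz : z ∈ R u v) : R z v ⊆ R u v :=
  hu u v z hz ▸ Set.subset_union_right

theorem AxU.isMonotone (hu : AxU R) (symm : ∀ u v, R u v = R v u) : IsMonotone R := by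
  intro u v p q hp hq
  rw [hu u v p hp] at hq
  rcases hq with hq | hq
  · exact symm q p ▸ (hu.subset_right hq).trans (hu.subset_left hp)
  · exact (hu.subset_left hq).trans (hu.subset_right hp)

theorem AxU.union_eq_of_mem (hu : AxU R) (hz : z ∈ R p q) (hq : q ∈ R p c) :
    R p q ∪ R z c = R p c := by
  have hzc : z ∈ R p c := hu.subset_left hq hz
  apply (Set.union_subset (hu.subset_left hq) (hu.subset_right hzc)).antisymm
  rw [hu p c z hzc]
  exact Set.union_subset_union_left _ (hu.subset_left hz)

theorem AxU.exists_union_eq (hu : AxU R) (hw : AxW R) (symm : ∀ u v, R u v = R v u)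
    (hz : z ∈ R p q) (c : V) : ∃ r s, R p q ∪ R z c = R r s := by
  rcases hw p q c with hc | hq | hp
  · exact ⟨p, q, Set.union_eq_left.2 (hu.isMonotone symm p q z c hz hc)⟩
  · exact ⟨p, c, hu.union_eq_of_mem hz hq⟩
  · rw [symm p q] at hz ⊢
    exact ⟨q, c, hu.union_eq_of_mem hz hp⟩

theorem AxU.axUC (hu : AxU R) (hw : AxW R) (left_mem : ∀ u v, u ∈ R u v)
    (symm : ∀ u v, R u v = R v u) : AxUC R := by
  rintro x y u v ⟨z, hxy, huv⟩
  obtain ⟨p, q, hpq⟩ := hu.exists_union_eq hw symm hxy u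
  have hz : z ∈ R p q := hpq ▸ Or.inl hxy
  obtain ⟨r, s, hrs⟩ := hu.exists_union_eq hw symm hz v
  have h : R x y ∪ R u v = R r s := by
    rw [hu u v z huv, symm u z, ← Set.union_assoc, hpq, hrs]
  exact ⟨r, h ▸ left_mem r s, s, h ▸ right_mem left_mem symm r s, h⟩

theorem stmt_0_general (left_mem : ∀ u v, u ∈ R u v) (symm : ∀ u v, R u v = R v u) :
    IsMonotone R ∧ AxUC R ↔ AxU R ∧ AxW R :=
  ⟨fun ⟨hm, huc⟩ => ⟨huc.axU hm left_mem symm, huc.axW hm left_mem symm⟩,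
    fun ⟨hu, hw⟩ => ⟨hu.isMonotone symm, hu.axUC hw left_mem symm⟩⟩

end

/-- For a monotone transit function R on a finite nonempty set V,
R satisfies (uc) iff R satisfies (u) and (w). -/
theorem stmt_0 {V : Type*} [Fintype V] [Nonempty V] (R : V → V → Set V)
    (htf : IsTransit R) (hm : IsMonotone R) :
    AxUC R ↔ (AxU R ∧ AxW R) := by
  rw [← stmt_0_general htf.1 htf.2.1, and_iff_right hm]

end TransitPaper
end

section
/- Let R be a monotone transit function on a finite nonempty set V satisfying axioms (l1) and (l2). Then R is pyramidal, i.e., there is a total order on V with respect to which every transit set R(u,v) is an interval. -/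
/-!
Restricting the transit sets to a subset of `V` preserves enough of the axioms for an induction over
finite ground sets `W`. If a proper subset `U` of `W` with at least two points overlaps no member of
the family, then an order of `W` with `U` contracted to a point and an order of `U` combine by
substitution. Otherwise two maximal proper members `M` and `N` overlap, and one of two things
happens.

* `W` is the union of disjoint members `M` and `T`, linked by a member overlapping both. The members
  overlapping `M` then form a chain, and any member that meets both `M` and `T` contains `M` or
  the least set `C` of this chain. Ordering `M` with a point of `C ∩ T` at its end and `T` with a
  point of `C ∩ M` at its beginning gives orders that can be concatenated.
* `M ∪ N = W`, and every member other than `W` lies in `M` or in `N`. Then either orders of two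
  complementary parts of `W` can be concatenated, or one of `M ∩ N`, `M \ N`, `N \ M` overlaps no
  member, or `W` is the union of a member overlapping `N` and a member overlapping `M` that are
  disjoint and linked by `M ∩ N`, as in the first case.

An infinite `V` is handled by a limit of orders of its finite subsets along an ultrafilter.
-/

namespace TransitPaper

variable {V : Type*}

section

variable {𝒞 : Set (Set V)} {W W' X Y U A B C D E M N S T : Set V} {x y m p q : V}
  {f g lt : V → V → Prop}

/-! ### Overlap systems -/

theorem ovl_iff : Ovl A B ↔ (∃ x ∈ A, x ∈ B) ∧ ¬ A ⊆ B ∧ ¬ B ⊆ A := by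
  rw [Ovl, Set.sdiff_nonempty, Set.sdiff_nonempty, Set.inter_nonempty]

theorem Ovl.symm (h : Ovl A B) : Ovl B A :=
  ⟨Set.inter_comm A B ▸ h.1, h.2.2, h.2.1⟩

/-- The consequences of (m), (l1) and (l2) for the family of transit sets that are inherited by
traces. `overlap_trichotomy` combines (l1), used with each of three sets in the middle, with the
part of (l2) that does not mention `s` and `t`; `no_four_cycle` is what the points `s` and `t` of
(l2) give together with monotonicity. -/
structure IsOverlapSystem (W : Set V) (𝒞 : Set (Set V)) : Prop where
  subset_ground : ∀ S ∈ 𝒞, S ⊆ W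
  singleton_mem : ∀ x ∈ W, {x} ∈ 𝒞
  exists_least : ∀ x ∈ W, ∀ y ∈ W, ∃ S, IsLeast {T | T ∈ 𝒞 ∧ x ∈ T ∧ y ∈ T} S
  overlap_trichotomy : ∀ A ∈ 𝒞, ∀ B ∈ 𝒞, ∀ C ∈ 𝒞, Ovl A B → Ovl B C →
    A ⊆ C ∨ C ⊆ A ∨ (Disjoint A C ∧ B ⊆ A ∪ C ∧ A ∪ C ∈ 𝒞)
  no_four_cycle : ∀ A ∈ 𝒞, ∀ B ∈ 𝒞, ∀ C ∈ 𝒞, ∀ D ∈ 𝒞, Ovl A B → Ovl B C → Ovl C D → Ovl D A →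
    Disjoint A C → Disjoint B D → False

theorem transitSets_nested_or_disjoint {R : V → V → Set V} (hl1 : AxL1 R)
    (hA : A ∈ transitSets R) (hB : B ∈ transitSets R) (hC : C ∈ transitSets R)
    (hAB : Ovl A B) (hBC : Ovl B C) :
    A ⊆ C ∨ C ⊆ A ∨ (Disjoint A C ∧ B ⊆ A ∪ C) := by
  obtain ⟨⟨x, y, rfl⟩, ⟨p, q, rfl⟩, ⟨u, v, rfl⟩⟩ := hA, hB, hC
  have middle_pq := hl1 _ _ _ _ _ _ hAB hBC
  have middle_xy (hAC : Ovl (R x y) (R u v)) := hl1 _ _ _ _ _ _ hAB.symm hAC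
  have middle_uv (hAC : Ovl (R x y) (R u v)) := hl1 _ _ _ _ _ _ hAC hBC.symm
  rw [ovl_iff] at *
  simp only [Set.disjoint_left]
  grind

theorem isOverlapSystem_transitSets {R : V → V → Set V} (htf : IsTransit R) (hm : IsMonotone R)
    (hl1 : AxL1 R) (hl2 : AxL2 R) : IsOverlapSystem Set.univ (transitSets R) where
  subset_ground _ _ := Set.subset_univ _
  singleton_mem x _ := ⟨x, x, (htf.2.2 x).symm⟩
  exists_least x _ y _ := by
    refine ⟨R x y, ⟨⟨x, y, rfl⟩, htf.1 x y, htf.2.1 x y ▸ htf.1 y x⟩, ?_⟩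
    rintro _ ⟨⟨u, v, rfl⟩, hx, hy⟩
    exact hm u v x y hx hy
  overlap_trichotomy A hA B hB C hC hAB hBC := by
    refine (transitSets_nested_or_disjoint hl1 hA hB hC hAB hBC).imp_right (.imp_right ?_)
    rintro ⟨hdisj, hsub⟩
    obtain ⟨⟨x, y, rfl⟩, ⟨p, q, rfl⟩, ⟨u, v, rfl⟩⟩ := hA, hB, hC
    obtain ⟨s, -, t, -, h⟩ := hl2 _ _ _ _ _ _ hAB hBC hdisj.inter_eq
    refine ⟨hdisj, hsub, s, t, ?_⟩
    rw [← h, Set.union_right_comm, Set.union_eq_left.2 hsub]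
  no_four_cycle A hA B hB C hC D hD hAB hBC hCD hDA hAC hBD := by
    have hA_sub := transitSets_nested_or_disjoint hl1 hD hA hB hDA hAB
    have hC_sub := transitSets_nested_or_disjoint hl1 hB hC hD hBC hCD
    obtain ⟨⟨x, y, rfl⟩, ⟨p, q, rfl⟩, ⟨u, v, rfl⟩, ⟨m, n, rfl⟩⟩ := hA, hB, hC, hD
    obtain ⟨s, hs, t, ht, h⟩ := hl2 _ _ _ _ _ _ hAB hBC hAC.inter_eq
    have hsub := hm m n s t
    rw [← h] at hsub
    rw [ovl_iff] at *
    simp only [Set.disjoint_left] at *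
    grind

/-- The family of intersections of the members of `𝒞` with `W`. -/
def trace (𝒞 : Set (Set V)) (W : Set V) : Set (Set V) :=
  (· ∩ W) '' 𝒞

theorem Ovl.of_inter (h : Ovl (A ∩ W) (B ∩ W)) : Ovl A B := by
  rw [ovl_iff] at *
  grind

theorem isOverlapSystem_trace (h : IsOverlapSystem W 𝒞) (hW : W' ⊆ W) :
    IsOverlapSystem W' (trace 𝒞 W') where
  subset_ground := by
    rintro _ ⟨S, -, rfl⟩
    exact Set.inter_subset_right
  singleton_mem x hx := ⟨{x}, h.singleton_mem x (hW hx), by simpa using hx⟩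
  exists_least x hx y hy := by
    obtain ⟨S, ⟨hS, hxS, hyS⟩, hmin⟩ := h.exists_least x (hW hx) y (hW hy)
    refine ⟨S ∩ W', ⟨⟨S, hS, rfl⟩, ⟨hxS, hx⟩, hyS, hy⟩, ?_⟩
    rintro _ ⟨⟨T, hT, rfl⟩, hxT, hyT⟩
    exact Set.inter_subset_inter_left W' (hmin ⟨hT, hxT.1, hyT.1⟩)
  overlap_trichotomy := by
    rintro _ ⟨A, hA, rfl⟩ _ ⟨B, hB, rfl⟩ _ ⟨C, hC, rfl⟩ hAB hBC
    obtain h | h | ⟨hdisj, hsub, hmem⟩ :=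
      h.overlap_trichotomy A hA B hB C hC hAB.of_inter hBC.of_inter
    · exact .inl (Set.inter_subset_inter_left W' h)
    · exact .inr (.inl (Set.inter_subset_inter_left W' h))
    · rw [← Set.union_inter_distrib_right]
      exact .inr (.inr ⟨hdisj.mono Set.inter_subset_left Set.inter_subset_left,
        Set.inter_subset_inter_left W' hsub, _, hmem, rfl⟩)
  no_four_cycle := by
    rintro _ ⟨A, hA, rfl⟩ _ ⟨B, hB, rfl⟩ _ ⟨C, hC, rfl⟩ _ ⟨D, hD, rfl⟩ hAB hBC hCD hDA hAC hBD
    have disjoint_of_trace {A B C : Set V} (hA : A ∈ 𝒞) (hB : B ∈ 𝒞) (hC : C ∈ 𝒞)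
        (hAB : Ovl (A ∩ W') (B ∩ W')) (hBC : Ovl (B ∩ W') (C ∩ W'))
        (hAC : Disjoint (A ∩ W') (C ∩ W')) : Disjoint A C := by
      have := h.overlap_trichotomy A hA B hB C hC hAB.of_inter hBC.of_inter
      rw [ovl_iff] at hAB hBC
      rw [Set.disjoint_left] at hAC
      grind
    exact h.no_four_cycle A hA B hB C hC D hD hAB.of_inter hBC.of_inter hCD.of_inter hDA.of_inter
      (disjoint_of_trace hA hB hC hAB hBC hAC) (disjoint_of_trace hB hC hD hBC hCD hBD)

theorem IsOverlapSystem.finite (h : IsOverlapSystem W 𝒞) (hW : W.Finite) : 𝒞.Finite :=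
  hW.finite_subsets.subset h.subset_ground

/-! ### Orders in which the members of a family are intervals -/

/-- The strict total order `lt` makes the trace on `W` of every member of `𝒞` an interval of `W`.
The order is total on the whole type so that ground sets can vary; only its restriction to `W`
matters. -/
structure FitsOn (𝒞 : Set (Set V)) (W : Set V) (lt : V → V → Prop) : Prop
    extends IsStrictTotalOrder V lt where
  interval : ∀ S ∈ 𝒞, ∀ x ∈ S ∩ W, ∀ y ∈ S ∩ W, ∀ w ∈ W, lt x w → lt w y → w ∈ S

/-- Some strict total order makes the traces on `W` of the members of `𝒞` intervals of `W`. -/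
def Orderable (𝒞 : Set (Set V)) (W : Set V) : Prop :=
  ∃ lt, FitsOn 𝒞 W lt

theorem FitsOn.swap (h : FitsOn 𝒞 W lt) : FitsOn 𝒞 W (Function.swap lt) :=
  have := h.toIsStrictTotalOrder
  { toIsStrictTotalOrder := inferInstance
    interval S hS x hx y hy w hw hxw hwy := h.interval S hS y hy x hx w hw hwy hxw }

theorem FitsOn.mono (h : FitsOn 𝒞 W lt) (hW : W' ⊆ W) : FitsOn 𝒞 W' lt where
  toIsStrictTotalOrder := h.toIsStrictTotalOrder
  interval S hS x hx y hy w hw := h.interval S hS x ⟨hx.1, hW hx.2⟩ y ⟨hy.1, hW hy.2⟩ w (hW hw)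

theorem orderable_trace_iff (hW : W' ⊆ W) : Orderable (trace 𝒞 W) W' ↔ Orderable 𝒞 W' := by
  refine exists_congr fun lt => ⟨fun h => ⟨h.toIsStrictTotalOrder, ?_⟩,
    fun h => ⟨h.toIsStrictTotalOrder, ?_⟩⟩
  · intro S hS x hx y hy w hw hxw hwy
    exact (h.interval _ ⟨S, hS, rfl⟩ x ⟨⟨hx.1, hW hx.2⟩, hx.2⟩ y ⟨⟨hy.1, hW hy.2⟩, hy.2⟩ w hw
      hxw hwy).1
  · rintro _ ⟨S, hS, rfl⟩ x hx y hy w hw hxw hwy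
    exact ⟨h.interval S hS x ⟨hx.1.1, hx.2⟩ y ⟨hy.1.1, hy.2⟩ w hw hxw hwy, hW hw⟩

theorem FitsOn.lt_or_lt (h : FitsOn 𝒞 W lt) (hxy : x ≠ y) : lt x y ∨ lt y x := by
  by_contra! hlt
  exact hxy (h.trichotomous x y hlt.1 hlt.2)

theorem orderable_of_trivial (h : ∀ S ∈ 𝒞, W ⊆ S ∨ S.Subsingleton) : Orderable 𝒞 W := by
  refine ⟨WellOrderingRel, inferInstance, fun S hS x hx y hy w hw hxw hwy => ?_⟩
  obtain hWS | hS := h S hS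
  · exact hWS hw
  · cases hS hx.1 hy.1
    exact (asymm hxw hwy).elim

/-- The order that puts `X`, ordered by `f`, before its complement, ordered by `g`. -/
def concatRel (X : Set V) (f g : V → V → Prop) (x y : V) : Prop :=
  (x ∈ X ∧ y ∉ X) ∨ (x ∈ X ∧ y ∈ X ∧ f x y) ∨ (x ∉ X ∧ y ∉ X ∧ g x y)

theorem isStrictTotalOrder_concatRel [hf : IsStrictTotalOrder V f] [hg : IsStrictTotalOrder V g] :
    IsStrictTotalOrder V (concatRel X f g) where
  trichotomous x y hxy hyx := by
    have := hf.trichotomous x y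
    have := hg.trichotomous x y
    unfold concatRel at hxy hyx
    grind
  irrefl x := by
    have := hf.irrefl x
    have := hg.irrefl x
    unfold concatRel
    grind
  trans x y z := by
    have := hf.trans x y z
    have := hg.trans x y z
    unfold concatRel
    grind

theorem FitsOn.concat (hf : FitsOn 𝒞 X f) (hg : FitsOn 𝒞 Y g)
    (h_final : ∀ S ∈ 𝒞, (S ∩ Y).Nonempty → ∀ x ∈ S ∩ X, ∀ w ∈ X, f x w → w ∈ S)
    (h_initial : ∀ S ∈ 𝒞, (S ∩ X).Nonempty → ∀ y ∈ S ∩ Y, ∀ w ∈ Y, g w y → w ∈ S) :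
    FitsOn 𝒞 (X ∪ Y) (concatRel X f g) where
  toIsStrictTotalOrder :=
    have := hf.toIsStrictTotalOrder
    have := hg.toIsStrictTotalOrder
    isStrictTotalOrder_concatRel
  interval S hS x hx y hy w hw hxw hwy := by
    have hf_mem := hf.interval S hS x
    have hg_mem := hg.interval S hS
    have hfin := h_final S hS
    have hini := h_initial S hS
    unfold concatRel at hxw hwy
    simp only [Set.Nonempty, Set.mem_inter_iff, Set.mem_union] at *
    grind

theorem Orderable.exists_forall_lt_of_not_subset (h : Orderable 𝒞 (A ∪ B)) (hA : A ∈ 𝒞)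
    (hB : B ∈ 𝒞) (hBA : ¬ B ⊆ A) :
    ∃ lt, FitsOn 𝒞 (A ∪ B) lt ∧ ∀ x ∈ A \ B, ∀ y ∈ B, lt x y := by
  obtain ⟨b, hbB, hbA⟩ := Set.not_subset.1 hBA
  obtain hempty | ⟨a, haA, -⟩ := (A \ B).eq_empty_or_nonempty
  · obtain ⟨lt, hlt⟩ := h
    exact ⟨lt, hlt, by simp [hempty]⟩
  obtain ⟨lt, hlt, hab⟩ : ∃ lt, FitsOn 𝒞 (A ∪ B) lt ∧ lt a b := by
    obtain ⟨lt, hlt⟩ := h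
    obtain hab | hba := hlt.lt_or_lt (ne_of_mem_of_not_mem haA hbA)
    exacts [⟨lt, hlt, hab⟩, ⟨_, hlt.swap, hba⟩]
  refine ⟨lt, hlt, fun x ⟨hxA, hxB⟩ y hy => ?_⟩
  have hxb : lt x b := (hlt.lt_or_lt (by grind)).resolve_right fun hbx =>
    hbA (hlt.interval A hA a ⟨haA, .inl haA⟩ x ⟨hxA, .inl hxA⟩ b (.inr hbB) hab hbx)
  exact (hlt.lt_or_lt (by grind)).resolve_right fun hyx =>
    hxB (hlt.interval B hB y ⟨hy, .inr hy⟩ b ⟨hbB, .inr hbB⟩ x (.inl hxA) hyx hxb)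

theorem Orderable.exists_forall_lt_of_diff_subset (h : Orderable 𝒞 X) (hS : S ∈ 𝒞) (hqX : q ∈ X)
    (hqS : q ∉ S) (hXS : X \ {q} ⊆ S) : ∃ lt, FitsOn 𝒞 X lt ∧ ∀ x ∈ X, x ≠ q → lt q x := by
  obtain ⟨lt, hlt⟩ := h
  have one_sided (a) (ha : a ∈ X \ {q}) (b) (hb : b ∈ X \ {q}) : ¬ (lt a q ∧ lt q b) :=
    fun ⟨haq, hqb⟩ => hqS (hlt.interval S hS a ⟨hXS ha, ha.1⟩ b ⟨hXS hb, hb.1⟩ q hqX haq hqb)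
  by_cases hfirst : ∀ x ∈ X, x ≠ q → lt q x
  · exact ⟨lt, hlt, hfirst⟩
  push Not at hfirst
  obtain ⟨b, hbX, hbq, hqb⟩ := hfirst
  have hbq' : lt b q := (hlt.lt_or_lt hbq).resolve_right hqb
  exact ⟨_, hlt.swap, fun x hxX hxq => (hlt.lt_or_lt hxq).resolve_right fun hqx =>
    one_sided b ⟨hbX, hbq⟩ x ⟨hxX, hxq⟩ ⟨hbq', hqx⟩⟩

/-- The order obtained from `g` by replacing the point `m` of `U` by all of `U`, ordered by `f`. -/
def substRel (U : Set V) (m : V) (f g : V → V → Prop) (x y : V) : Prop :=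
  (x ∈ U ∧ y ∈ U ∧ f x y) ∨ (x ∈ U ∧ y ∉ U ∧ g m y) ∨ (x ∉ U ∧ y ∈ U ∧ g x m) ∨
    (x ∉ U ∧ y ∉ U ∧ g x y)

theorem isStrictTotalOrder_substRel [hf : IsStrictTotalOrder V f] [hg : IsStrictTotalOrder V g]
    (hm : m ∈ U) : IsStrictTotalOrder V (substRel U m f g) where
  trichotomous x y hxy hyx := by
    have := hf.trichotomous x y
    have := hg.trichotomous
    unfold substRel at hxy hyx
    grind
  irrefl x := by
    have := hf.irrefl x
    have := hg.irrefl x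
    unfold substRel
    grind
  trans x y z := by
    have := hf.trans x y z
    have := hg.trans
    have := hg.irrefl
    unfold substRel
    grind

theorem FitsOn.subst (hf : FitsOn 𝒞 U f) (hg : FitsOn 𝒞 (insert m (W \ U)) g) (hm : m ∈ U)
    (hU : ∀ S ∈ 𝒞, ¬ Ovl S U) : FitsOn 𝒞 W (substRel U m f g) where
  toIsStrictTotalOrder :=
    have := hf.toIsStrictTotalOrder
    have := hg.toIsStrictTotalOrder
    isStrictTotalOrder_substRel hm
  interval S hS x hx y hy w hw hxw hwy := by
    have hf_mem := hf.interval S hS x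
    have hg_mem := hg.interval S hS
    have hg_asymm (a b) : g a b → ¬ g b a := fun hab hba => hg.irrefl a (hg.trans a b a hab hba)
    have hSU := hU S hS
    rw [ovl_iff] at hSU
    unfold substRel at hxw hwy
    simp only [Set.mem_inter_iff, Set.mem_insert_iff, Set.mem_sdiff] at *
    grind

theorem orderable_of_forall_not_ovl (ih : ∀ W' ⊂ W, Orderable 𝒞 W') (hUW : U ⊂ W)
    (hU : U.Nontrivial) (hovl : ∀ S ∈ 𝒞, ¬ Ovl S U) : Orderable 𝒞 W := by
  obtain ⟨m, hm, n, hn, hmn⟩ := hU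
  have hsub : insert m (W \ U) ⊂ W := by
    rw [ssubset_iff_subset_not_subset] at *
    grind
  obtain ⟨f, hf⟩ := ih U hUW
  obtain ⟨g, hg⟩ := ih _ hsub
  exact ⟨_, hf.subst hg hm hovl⟩

/-! ### Ground sets that are unions of two disjoint members -/

theorem Ovl.nontrivial_left (h : Ovl A B) : A.Nontrivial := by
  obtain ⟨⟨x, hxA, hxB⟩, ⟨y, hyA, hyB⟩, -⟩ := h
  exact ⟨x, hxA, y, hyA, fun hxy => hyB (hxy ▸ hxB)⟩

theorem exists_fitsOn_left_of_mem (ih : ∀ W' ⊂ M ∪ T, Orderable 𝒞 W') (hMT : Disjoint M T)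
    (hM : M ∈ 𝒞) (hT : T.Nontrivial) (hqT : q ∈ T)
    (hq : ∀ S ∈ 𝒞, (S ∩ M).Nonempty → (S ∩ T).Nonempty → M ⊆ S ∨ q ∈ S) :
    ∃ f, FitsOn 𝒞 M f ∧
      ∀ S ∈ 𝒞, (S ∩ T).Nonempty → ∀ x ∈ S ∩ M, ∀ w ∈ M, f w x → w ∈ S := by
  have hqM : q ∉ M := Set.disjoint_right.1 hMT hqT
  have hqM_ssub : insert q M ⊂ M ∪ T := by
    have := hT.exists_ne q
    rw [Set.disjoint_left] at hMT
    rw [ssubset_iff_subset_not_subset]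
    grind
  obtain ⟨f, hf, hq_first⟩ := (ih _ hqM_ssub).exists_forall_lt_of_diff_subset hM
    (Set.mem_insert q M) hqM (by simp)
  refine ⟨f, hf.mono (Set.subset_insert q M), fun S hS hST x hx w hw hwx => ?_⟩
  obtain hMS | hqS := hq S hS ⟨x, hx⟩ hST
  · exact hMS hw
  · exact hf.interval S hS q ⟨hqS, .inl rfl⟩ x ⟨hx.1, .inr hx.2⟩ w (.inr hw)
      (hq_first w (.inr hw) (ne_of_mem_of_not_mem hw hqM)) hwx

theorem orderable_union_of_mem (ih : ∀ W' ⊂ M ∪ T, Orderable 𝒞 W') (hMT : Disjoint M T)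
    (hM : M ∈ 𝒞) (hT : T ∈ 𝒞) (hM_nontriv : M.Nontrivial) (hT_nontriv : T.Nontrivial)
    (hpM : p ∈ M) (hqT : q ∈ T)
    (hpq : ∀ S ∈ 𝒞, (S ∩ M).Nonempty → (S ∩ T).Nonempty → p ∈ S ∧ (M ⊆ S ∨ q ∈ S)) :
    Orderable 𝒞 (M ∪ T) := by
  obtain ⟨f, hf, hf_initial⟩ := exists_fitsOn_left_of_mem ih hMT hM hT_nontriv hqT
    fun S hS hSM hST => (hpq S hS hSM hST).2
  rw [Set.union_comm] at ih
  obtain ⟨g, hg, hg_initial⟩ := exists_fitsOn_left_of_mem ih hMT.symm hT hM_nontriv hpM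
    fun S hS hST hSM => .inr (hpq S hS hSM hST).1
  exact ⟨_, hf.swap.concat hg hf_initial hg_initial⟩

theorem orderable_union_of_isChain (h𝒞 : 𝒞.Finite) (ih : ∀ W' ⊂ M ∪ T, Orderable 𝒞 W')
    (hMT : Disjoint M T) (hM : M ∈ 𝒞) (hT : T ∈ 𝒞) (hT_nontriv : T.Nontrivial) (hN : N ∈ 𝒞)
    (hMN : Ovl M N) (hNW : N ⊆ M ∪ T) (hchain : IsChain (· ⊆ ·) {C | C ∈ 𝒞 ∧ Ovl M C}) :
    Orderable 𝒞 (M ∪ T) := by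
  obtain ⟨C, hCN, ⟨hC, hMC⟩, hC_min⟩ :=
    (h𝒞.subset fun C hC => hC.1).exists_le_minimal (s := {C | C ∈ 𝒞 ∧ Ovl M C}) ⟨hN, hMN⟩
  have hC_least (S) (hS : S ∈ 𝒞) (hMS : Ovl M S) : C ⊆ S :=
    (hchain.total ⟨hC, hMC⟩ ⟨hS, hMS⟩).elim id (hC_min ⟨hS, hMS⟩)
  obtain ⟨⟨p, hpM, hpC⟩, -, ⟨q, hqC, hqM⟩⟩ := id hMC
  have hqT : q ∈ T := (hNW (hCN hqC)).resolve_left hqM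
  refine orderable_union_of_mem ih hMT hM hT hMN.nontrivial_left hT_nontriv hpM hqT ?_
  rintro S hS hSM ⟨z, hzS, hzT⟩
  by_cases hMS : M ⊆ S
  · exact ⟨hMS hpM, .inl hMS⟩
  · have hCS : C ⊆ S := hC_least S hS ⟨Set.inter_comm S M ▸ hSM, Set.sdiff_nonempty.2 hMS,
      ⟨z, hzS, Set.disjoint_right.1 hMT hzT⟩⟩
    exact ⟨hCS hpC, .inr (hCS hqC)⟩

theorem IsOverlapSystem.isChain_ovl (h : IsOverlapSystem (M ∪ T) 𝒞) (hM : M ∈ 𝒞) (hN : N ∈ 𝒞)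
    (hT : T ∈ 𝒞) (hMN : Ovl M N) (hNT : Ovl N T) (hMT : Disjoint M T) :
    IsChain (· ⊆ ·) {C | C ∈ 𝒞 ∧ Ovl M C} := by
  have meets_N (C) (hC : C ∈ 𝒞) (hMC : Ovl M C) : ¬ Disjoint N C := by
    intro hNC
    have hTC : Ovl T C := by
      have := h.subset_ground C hC
      rw [Set.disjoint_left] at *
      rw [ovl_iff] at *
      grind
    exact h.no_four_cycle M hM N hN T hT C hC hMN hNT hTC hMC.symm hMT hNC
  have nested_N (C) (hC : C ∈ 𝒞) (hMC : Ovl M C) : N ⊆ C ∨ C ⊆ N :=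
    (h.overlap_trichotomy N hN M hM C hC hMN.symm hMC).imp_right
      (Or.resolve_right · fun hdisj => meets_N C hC hMC hdisj.1)
  rintro C ⟨hC, hMC⟩ D ⟨hD, hMD⟩ -
  have hCD := h.overlap_trichotomy C hC M hM D hD hMC.symm hMD
  have := nested_N C hC hMC
  have := nested_N D hD hMD
  rw [ovl_iff] at hMN
  rw [Set.disjoint_left] at hCD
  grind

theorem IsOverlapSystem.orderable_of_disjoint (h : IsOverlapSystem (M ∪ T) 𝒞) (h𝒞 : 𝒞.Finite)
    (ih : ∀ W' ⊂ M ∪ T, Orderable 𝒞 W') (hM : M ∈ 𝒞) (hN : N ∈ 𝒞) (hT : T ∈ 𝒞)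
    (hMN : Ovl M N) (hNT : Ovl N T) (hMT : Disjoint M T) : Orderable 𝒞 (M ∪ T) :=
  orderable_union_of_isChain h𝒞 ih hMT hM hT hNT.symm.nontrivial_left hN hMN
    (h.subset_ground N hN) (h.isChain_ovl hM hN hT hMN hNT hMT)

/-! ### Covering pairs -/

/-- Two overlapping members of `𝒞` whose union is the ground set `W`, such that every member other
than `W` is contained in one of them. -/
structure IsCoveringPair (W : Set V) (𝒞 : Set (Set V)) (M N : Set V) : Prop where
  left_mem : M ∈ 𝒞
  right_mem : N ∈ 𝒞
  ovl : Ovl M N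
  union_eq : M ∪ N = W
  eq_or_subset : ∀ S ∈ 𝒞, S = W ∨ S ⊆ M ∨ S ⊆ N

namespace IsCoveringPair

theorem symm (hp : IsCoveringPair W 𝒞 M N) : IsCoveringPair W 𝒞 N M where
  left_mem := hp.right_mem
  right_mem := hp.left_mem
  ovl := hp.ovl.symm
  union_eq := Set.union_comm N M ▸ hp.union_eq
  eq_or_subset S hS := (hp.eq_or_subset S hS).imp_right Or.symm

theorem subset_left_of_ovl (hp : IsCoveringPair W 𝒞 M N) (hD : D ∈ 𝒞) (hDN : Ovl D N) : D ⊆ M := by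
  have := hp.eq_or_subset D hD
  have := hp.union_eq
  rw [ovl_iff] at hDN
  grind

theorem left_ssubset (hp : IsCoveringPair W 𝒞 M N) : M ⊂ W := by
  have := hp.union_eq
  have := (ovl_iff.1 hp.ovl).2.2
  rw [ssubset_iff_subset_not_subset]
  grind

/-- When the members overlapping `N` do not all contain `M \ N`, a maximal exception `D` cuts off
the final piece `M \ (N ∪ D)` of `M`. -/
theorem diff_subset_of_maximal (hp : IsCoveringPair W 𝒞 M N) (h : IsOverlapSystem W 𝒞)
    (hD : Maximal (fun D => D ∈ 𝒞 ∧ Ovl D N ∧ ¬ M \ N ⊆ D) D) (hS : S ∈ 𝒞)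
    (hSL : (S ∩ (M \ (D ∪ N))).Nonempty) (hSDN : (S ∩ (D ∪ N)).Nonempty) : M \ N ⊆ S := by
  obtain ⟨⟨hD_mem, hDN, hD_diff⟩, hD_max⟩ := hD
  have hDM := hp.subset_left_of_ovl hD_mem hDN
  have hMN := ovl_iff.1 hp.ovl
  have hW := hp.union_eq
  have hD_max := @hD_max S
  obtain ⟨a, haS, ⟨haM, haDN⟩⟩ := hSL
  obtain ⟨b, hbS, hb⟩ := hSDN
  obtain rfl | hSM | hSN := hp.eq_or_subset S hS
  · grind
  · by_cases hSN : ∃ x ∈ S, x ∈ N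
    · have hS_ovl : Ovl S N := by
        rw [ovl_iff]
        grind
      have := h.overlap_trichotomy D hD_mem N hp.right_mem S hS hDN hS_ovl.symm
      grind
    · have hDS : Ovl D S := by
        rw [ovl_iff] at *
        grind
      have := h.overlap_trichotomy N hp.right_mem D hD_mem S hS hDN.symm hDS
      have := hp.eq_or_subset (N ∪ S)
      grind
  · grind

theorem orderable_of_maximal (hp : IsCoveringPair W 𝒞 M N) (h : IsOverlapSystem W 𝒞)
    (ih : ∀ W' ⊂ W, Orderable 𝒞 W')
    (hD : Maximal (fun D => D ∈ 𝒞 ∧ Ovl D N ∧ ¬ M \ N ⊆ D) D) : Orderable 𝒞 W := by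
  obtain ⟨hD_mem, hDN, hD_diff⟩ := hD.prop
  obtain ⟨d, hdD, hdN⟩ := hDN.2.1
  have hDM := hp.subset_left_of_ovl hD_mem hDN
  have hW : (M \ (D ∪ N)) ∪ (D ∪ N) = W := by
    rw [Set.sdiff_union_self, ← Set.union_assoc, Set.union_eq_left.2 hDM, hp.union_eq]
  have hDN_ssub : D ∪ N ⊂ W := by
    obtain ⟨a, ⟨haM, haN⟩, haD⟩ := Set.not_subset.1 hD_diff
    exact (Set.ssubset_iff_of_subset (hW ▸ Set.subset_union_right)).2
      ⟨a, hp.left_ssubset.subset haM, by simp [haD, haN]⟩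
  have hL_ssub : M \ (D ∪ N) ⊂ W := Set.sdiff_subset.trans_ssubset hp.left_ssubset
  obtain ⟨f, hf⟩ := ih _ hL_ssub
  obtain ⟨g, hg, hD_first⟩ := (ih _ hDN_ssub).exists_forall_lt_of_not_subset hD_mem hp.right_mem
    (ovl_iff.1 hDN).2.2
  rw [← hW]
  refine ⟨_, hf.concat hg ?_ ?_⟩
  · intro S hS hSDN x hx w hw _
    exact hp.diff_subset_of_maximal h hD hS ⟨x, hx⟩ hSDN (by grind)
  · intro S hS hSL y hy w hw hwy
    have hdiff := hp.diff_subset_of_maximal h hD hS hSL ⟨y, hy⟩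
    by_cases hwN : w ∈ N
    · exact hg.interval S hS d ⟨hdiff ⟨hDM hdD, hdN⟩, .inl hdD⟩ y hy w hw
        (hD_first d ⟨hdD, hdN⟩ w hwN) hwy
    · exact hdiff (by grind)

theorem orderable_of_ovl_right (hp : IsCoveringPair W 𝒞 M N) (h : IsOverlapSystem W 𝒞)
    (h𝒞 : 𝒞.Finite) (ih : ∀ W' ⊂ W, Orderable 𝒞 W') (hD : D ∈ 𝒞) (hDN : Ovl D N)
    (hD_diff : ¬ M \ N ⊆ D) : Orderable 𝒞 W := by
  obtain ⟨E, -, hE⟩ := (h𝒞.subset fun D hD => hD.1).exists_le_maximal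
    (s := {D | D ∈ 𝒞 ∧ Ovl D N ∧ ¬ M \ N ⊆ D}) ⟨hD, hDN, hD_diff⟩
  exact hp.orderable_of_maximal h ih hE

theorem inter_mem_of_ovl_right (hp : IsCoveringPair W 𝒞 M N) (h : IsOverlapSystem W 𝒞)
    (h𝒞 : 𝒞.Finite) (hD : D ∈ 𝒞) (hDN : Ovl D N) (hD_inter : ¬ M ∩ N ⊆ D) : M ∩ N ∈ 𝒞 := by
  have hDM := hp.subset_left_of_ovl hD hDN
  obtain ⟨⟨u, huD, huN⟩, ⟨d, hdD, hdN⟩, -⟩ := hDN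
  obtain ⟨v, hv, hvD⟩ := Set.not_subset.1 hD_inter
  have exists_ovl (x) (hx : x ∈ M ∩ N) (hxD : x ∈ D) (y) (hy : y ∈ M ∩ N) (hyD : y ∉ D) :
      ∃ T, (T ∈ 𝒞 ∧ T ⊆ M ∩ N ∧ Ovl T D) ∧ x ∈ T ∧ y ∈ T := by
    have hMW := h.subset_ground M hp.left_mem
    obtain ⟨T, ⟨hT, hxT, hyT⟩, hT_least⟩ := h.exists_least x (hMW hx.1) y (hMW hy.1)
    have hTM : T ⊆ M := hT_least ⟨hp.left_mem, hx.1, hy.1⟩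
    have hTN : T ⊆ N := hT_least ⟨hp.right_mem, hx.2, hy.2⟩
    exact ⟨T, ⟨hT, Set.subset_inter hTM hTN, ⟨x, hxT, hxD⟩, ⟨y, hyT, hyD⟩,
      ⟨d, hdD, fun hdT => hdN (hTN hdT)⟩⟩, hxT, hyT⟩
  obtain ⟨T₀, hT₀, -⟩ := exists_ovl u ⟨hDM huD, huN⟩ huD v hv hvD
  obtain ⟨T, -, ⟨hT, hTI, hTD⟩, hT_max⟩ := (h𝒞.subset fun T hT => hT.1).exists_le_maximal
    (s := {T | T ∈ 𝒞 ∧ T ⊆ M ∩ N ∧ Ovl T D}) hT₀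
  have subset_of_meets (S) (hS : S ∈ 𝒞 ∧ S ⊆ M ∩ N ∧ Ovl S D) (t) (htT : t ∈ T) (htS : t ∈ S) :
      S ⊆ T := by
    obtain hTS | hST | ⟨hdisj, -⟩ := h.overlap_trichotomy T hT D hD S hS.1 hTD hS.2.2.symm
    · exact hT_max hS hTS
    · exact hST
    · exact (Set.disjoint_left.1 hdisj htT htS).elim
  suffices M ∩ N ⊆ T from hTI.antisymm this ▸ hT
  intro z hz
  obtain ⟨⟨a, haT, haD⟩, ⟨b, hbT, hbD⟩, -⟩ := hTD
  by_cases hzD : z ∈ D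
  · obtain ⟨S, hS, hzS, hbS⟩ := exists_ovl z hz hzD b (hTI hbT) hbD
    exact subset_of_meets S hS b hbT hbS hzS
  · obtain ⟨S, hS, haS, hzS⟩ := exists_ovl a (hTI haT) haD z hz hzD
    exact subset_of_meets S hS a haT haS hzS

theorem orderable_of_inter_notMem (hp : IsCoveringPair W 𝒞 M N) (h : IsOverlapSystem W 𝒞)
    (h𝒞 : 𝒞.Finite) (ih : ∀ W' ⊂ W, Orderable 𝒞 W') (hMN : M ∩ N ∉ 𝒞) : Orderable 𝒞 W := by
  have inter_subset_right (D) (hD : D ∈ 𝒞) (hDN : Ovl D N) : M ∩ N ⊆ D := by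
    by_contra hsub
    exact hMN (hp.inter_mem_of_ovl_right h h𝒞 hD hDN hsub)
  have inter_subset_left (E) (hE : E ∈ 𝒞) (hEM : Ovl E M) : M ∩ N ⊆ E := by
    by_contra hsub
    rw [Set.inter_comm] at hMN hsub
    exact hMN (hp.symm.inter_mem_of_ovl_right h h𝒞 hE hEM hsub)
  refine orderable_of_forall_not_ovl ih (U := M ∩ N)
    (Set.inter_subset_left.trans_ssubset hp.left_ssubset) ?_ fun S hS hovl => ?_
  · obtain ⟨x, hx⟩ := hp.ovl.1
    by_contra hsub
    rw [(Set.not_nontrivial_iff.1 hsub).eq_singleton_of_mem hx] at hMN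
    exact hMN (h.singleton_mem x (h.subset_ground M hp.left_mem hx.1))
  · have := inter_subset_right S hS
    have := inter_subset_left S hS
    have := hp.eq_or_subset S hS
    have := hp.union_eq
    rw [ovl_iff] at *
    grind

theorem orderable_of_not_inter_subset (hp : IsCoveringPair W 𝒞 M N) (h : IsOverlapSystem W 𝒞)
    (h𝒞 : 𝒞.Finite) (ih : ∀ W' ⊂ W, Orderable 𝒞 W') (hMN : M ∩ N ∈ 𝒞)
    (hD : D ∈ 𝒞) (hDN : Ovl D N) (hD_inter : ¬ M ∩ N ⊆ D)
    (hE : E ∈ 𝒞) (hEM : Ovl E M) (hE_inter : ¬ M ∩ N ⊆ E) : Orderable 𝒞 W := by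
  have hDM := hp.subset_left_of_ovl hD hDN
  have hEN := hp.symm.subset_left_of_ovl hE hEM
  rw [ovl_iff] at hDN hEM
  have hD_ovl : Ovl D (M ∩ N) := by
    rw [ovl_iff]
    grind
  have hE_ovl : Ovl (M ∩ N) E := by
    rw [ovl_iff]
    grind
  obtain hDE | hED | ⟨hdisj, -, hunion⟩ :=
    h.overlap_trichotomy D hD (M ∩ N) hMN E hE hD_ovl hE_ovl
  · exact absurd (hDE.trans hEN) hDN.2.1
  · exact absurd (hED.trans hDM) hEM.2.1
  · obtain rfl | hsub | hsub := hp.eq_or_subset _ hunion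
    · exact h.orderable_of_disjoint h𝒞 ih hD hMN hE hD_ovl hE_ovl hdisj
    · exact absurd (Set.subset_union_right.trans hsub) hEM.2.1
    · exact absurd (Set.subset_union_left.trans hsub) hDN.2.1

theorem orderable_of_diff_nontrivial (hp : IsCoveringPair W 𝒞 M N)
    (ih : ∀ W' ⊂ W, Orderable 𝒞 W') (hN : ∀ D ∈ 𝒞, Ovl D N → M \ N ⊆ D)
    (hMN : (M \ N).Nontrivial) : Orderable 𝒞 W := by
  refine orderable_of_forall_not_ovl ih (Set.sdiff_subset.trans_ssubset hp.left_ssubset) hMN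
    fun S hS hovl => ?_
  have := hN S hS
  have := hp.eq_or_subset S hS
  have := hp.union_eq
  have := hp.ovl
  rw [ovl_iff] at *
  grind

theorem orderable_of_diff_subsingleton (hp : IsCoveringPair W 𝒞 M N)
    (ih : ∀ W' ⊂ W, Orderable 𝒞 W') (hMN : M ∩ N ∈ 𝒞) (hsub : (M \ N).Subsingleton)
    (hM : ∀ E ∈ 𝒞, Ovl E M → N ⊆ E) : Orderable 𝒞 W := by
  obtain ⟨a, haM, haN⟩ := hp.ovl.2.1
  obtain ⟨f, hf, ha_first⟩ := (ih M hp.left_ssubset).exists_forall_lt_of_diff_subset hMN haM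
    (fun ha => haN ha.2) (fun x ⟨hxM, hxa⟩ => ⟨hxM, by_contra fun hxN =>
      hxa (hsub ⟨hxM, hxN⟩ ⟨haM, haN⟩)⟩)
  obtain ⟨g, hg⟩ := ih (N \ M) (Set.sdiff_subset.trans_ssubset hp.symm.left_ssubset)
  have right_subset (S) (hS : S ∈ 𝒞) (hSM : (S ∩ M).Nonempty) (hSN : (S ∩ (N \ M)).Nonempty) :
      S = W ∨ N ⊆ S := by
    have := hp.eq_or_subset S hS
    have := hM S hS
    rw [ovl_iff] at this
    obtain ⟨⟨x, hx⟩, ⟨y, hy⟩⟩ := hSM, hSN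
    grind
  rw [← hp.union_eq, ← Set.union_sdiff_self]
  refine ⟨_, hf.concat hg ?_ ?_⟩
  · intro S hS hSN x hx w hw hxw
    have hwa : w ≠ a := by
      rintro rfl
      by_cases hxw' : x = w
      · exact hf.irrefl x (hxw' ▸ hxw)
      · exact hf.irrefl x (hf.trans x w x hxw (ha_first x hx.2 hxw'))
    have hwN : w ∈ N := by_contra fun hwN => hwa (hsub ⟨hw, hwN⟩ ⟨haM, haN⟩)
    obtain rfl | hNS := right_subset S hS ⟨x, hx⟩ hSN
    exacts [hp.union_eq ▸ .inl hw, hNS hwN]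
  · intro S hS hSM y hy w hw _
    obtain rfl | hNS := right_subset S hS hSM ⟨y, hy⟩
    exacts [hp.union_eq ▸ .inr hw.1, hNS hw.1]

theorem orderable (hp : IsCoveringPair W 𝒞 M N) (h : IsOverlapSystem W 𝒞)
    (h𝒞 : 𝒞.Finite) (ih : ∀ W' ⊂ W, Orderable 𝒞 W') : Orderable 𝒞 W := by
  by_contra hW
  have hN (D) (hD : D ∈ 𝒞) (hDN : Ovl D N) : M \ N ⊆ D := by
    by_contra hsub
    exact hW (hp.orderable_of_ovl_right h h𝒞 ih hD hDN hsub)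
  have hM (E) (hE : E ∈ 𝒞) (hEM : Ovl E M) : N \ M ⊆ E := by
    by_contra hsub
    exact hW (hp.symm.orderable_of_ovl_right h h𝒞 ih hE hEM hsub)
  have hMN : M ∩ N ∈ 𝒞 := by
    by_contra hMN
    exact hW (hp.orderable_of_inter_notMem h h𝒞 ih hMN)
  have hMN_sub : (M \ N).Subsingleton :=
    Set.not_nontrivial_iff.1 fun hnt => hW (hp.orderable_of_diff_nontrivial ih hN hnt)
  have hNM_sub : (N \ M).Subsingleton :=
    Set.not_nontrivial_iff.1 fun hnt => hW (hp.symm.orderable_of_diff_nontrivial ih hM hnt)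
  obtain ⟨E, hE, hEM, hE_inter⟩ : ∃ E ∈ 𝒞, Ovl E M ∧ ¬ M ∩ N ⊆ E := by
    by_contra! hinter
    refine hW (hp.orderable_of_diff_subsingleton ih hMN hMN_sub fun E hE hEM => ?_)
    exact Set.inter_union_sdiff N M ▸
      Set.union_subset (Set.inter_comm M N ▸ hinter E hE hEM) (hM E hE hEM)
  obtain ⟨D, hD, hDN, hD_inter⟩ : ∃ D ∈ 𝒞, Ovl D N ∧ ¬ M ∩ N ⊆ D := by
    by_contra! hinter
    refine hW (hp.symm.orderable_of_diff_subsingleton ih (Set.inter_comm M N ▸ hMN) hNM_sub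
      fun D hD hDN => ?_)
    exact Set.inter_union_sdiff M N ▸ Set.union_subset (hinter D hD hDN) (hN D hD hDN)
  exact hW (hp.orderable_of_not_inter_subset h h𝒞 ih hMN hD hDN hD_inter hE hEM hE_inter)

end IsCoveringPair

/-! ### Induction over finite ground sets -/

theorem ovl_of_maximal (hM : Maximal (fun S => S ∈ 𝒞 ∧ S ≠ W) M) (hS : S ∈ 𝒞) (hSW : S ≠ W)
    (hMS : (M ∩ S).Nonempty) (hS_not : ¬ S ⊆ M) : Ovl M S :=
  ⟨hMS, Set.sdiff_nonempty.2 fun hsub => hS_not (hM.2 ⟨hS, hSW⟩ hsub), Set.sdiff_nonempty.2 hS_not⟩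

namespace IsOverlapSystem

theorem orderable_of_maximal_of_meets (h : IsOverlapSystem W 𝒞) (h𝒞 : 𝒞.Finite)
    (ih : ∀ W' ⊂ W, Orderable 𝒞 W') (hM : Maximal (fun S => S ∈ 𝒞 ∧ S ≠ W) M)
    (hN : Maximal (fun S => S ∈ 𝒞 ∧ S ≠ W) N) (hMN : Ovl M N) (hT : T ∈ 𝒞) (hTW : T ≠ W)
    (hTM : ¬ T ⊆ M) (hTN : ¬ T ⊆ N) (hNT : (N ∩ T).Nonempty) : Orderable 𝒞 W := by
  have hNT' : Ovl N T := ovl_of_maximal hN hT hTW hNT hTN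
  obtain hMT | hTM' | ⟨hdisj, -, hunion⟩ :=
    h.overlap_trichotomy M hM.1.1 N hN.1.1 T hT hMN hNT'
  · exact absurd (hM.2 ⟨hT, hTW⟩ hMT) hTM
  · exact absurd hTM' hTM
  · obtain rfl : M ∪ T = W := by
      by_contra hne
      exact hTM (Set.subset_union_right.trans (hM.2 ⟨hunion, hne⟩ Set.subset_union_left))
    exact h.orderable_of_disjoint h𝒞 ih hM.1.1 hN.1.1 hT hMN hNT' hdisj

theorem orderable_of_maximal_of_ovl (h : IsOverlapSystem W 𝒞) (h𝒞 : 𝒞.Finite)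
    (ih : ∀ W' ⊂ W, Orderable 𝒞 W') (hM : Maximal (fun S => S ∈ 𝒞 ∧ S ≠ W) M)
    (hN : Maximal (fun S => S ∈ 𝒞 ∧ S ≠ W) N) (hMN : Ovl M N) : Orderable 𝒞 W := by
  by_contra hW
  have union_disjoint (T) (hT : T ∈ 𝒞) (hTW : T ≠ W) (hTM : ¬ T ⊆ M) (hTN : ¬ T ⊆ N) :
      Disjoint (M ∪ N) T := by
    refine Set.disjoint_union_left.2 ⟨?_, ?_⟩ <;> by_contra hmeets <;>
      rw [Set.not_disjoint_iff_nonempty_inter] at hmeets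
    · exact hW (h.orderable_of_maximal_of_meets h𝒞 ih hN hM hMN.symm hT hTW hTN hTM hmeets)
    · exact hW (h.orderable_of_maximal_of_meets h𝒞 ih hM hN hMN hT hTW hTM hTN hmeets)
  have hMW := h.subset_ground M hM.1.1
  have hNW := h.subset_ground N hN.1.1
  obtain hMN_eq | hMN_ssub := (Set.union_subset hMW hNW).eq_or_ssubset
  · refine hW (IsCoveringPair.orderable (M := M) (N := N)
      ⟨hM.1.1, hN.1.1, hMN, hMN_eq, fun S hS => ?_⟩ h h𝒞 ih)
    by_contra! hS_not
    obtain ⟨x, hxS, -⟩ := Set.not_subset.1 hS_not.2.1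
    exact Set.disjoint_right.1 (union_disjoint S hS hS_not.1 hS_not.2.1 hS_not.2.2) hxS
      (hMN_eq ▸ h.subset_ground S hS hxS)
  · refine hW (orderable_of_forall_not_ovl ih hMN_ssub
      (hMN.nontrivial_left.mono Set.subset_union_left) fun S hS hovl => ?_)
    rw [ovl_iff] at hovl
    have hSW : S ≠ W := fun hSW => hovl.2.2 (hSW ▸ hMN_ssub.subset)
    have hSM : ¬ S ⊆ M := fun hSM => hovl.2.1 (hSM.trans Set.subset_union_left)
    have hSN : ¬ S ⊆ N := fun hSN => hovl.2.1 (hSN.trans Set.subset_union_right)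
    obtain ⟨x, hxS, hx⟩ := hovl.1
    exact Set.disjoint_right.1 (union_disjoint S hS hSW hSM hSN) hxS hx

theorem orderable_of_forall_ssubset (h : IsOverlapSystem W 𝒞) (h𝒞 : 𝒞.Finite)
    (ih : ∀ W' ⊂ W, Orderable 𝒞 W') : Orderable 𝒞 W := by
  have exists_maximal (S) (hS : S ∈ 𝒞) (hSW : S ≠ W) :
      ∃ M, S ⊆ M ∧ Maximal (fun S => S ∈ 𝒞 ∧ S ≠ W) M :=
    (h𝒞.subset fun S hS => hS.1).exists_le_maximal (s := {S | S ∈ 𝒞 ∧ S ≠ W}) ⟨hS, hSW⟩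
  by_cases htriv : ∀ S ∈ 𝒞, W ⊆ S ∨ S.Subsingleton
  · exact orderable_of_trivial htriv
  push Not at htriv
  obtain ⟨S, hS, hWS, hS_nontriv⟩ := htriv
  obtain ⟨M, hSM, hM⟩ := exists_maximal S hS fun hSW => hWS hSW.ge
  by_cases hovl : ∀ A ∈ 𝒞, ¬ Ovl A M
  · exact orderable_of_forall_not_ovl ih ((h.subset_ground M hM.1.1).ssubset_of_ne hM.1.2)
      (hS_nontriv.mono hSM) hovl
  push Not at hovl
  obtain ⟨A, hA, hAM⟩ := hovl
  rw [ovl_iff] at hAM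
  have hAW : A ≠ W := fun hAW => hAM.2.2 (hAW ▸ h.subset_ground M hM.1.1)
  obtain ⟨N, hAN, hN⟩ := exists_maximal A hA hAW
  obtain ⟨x, hxA, hxM⟩ := hAM.1
  exact h.orderable_of_maximal_of_ovl h𝒞 ih hM hN
    (ovl_of_maximal hM hN.1.1 hN.1.2 ⟨x, hxM, hAN hxA⟩ fun hNM => hAM.2.1 (hAN.trans hNM))

theorem orderable_finset (h : IsOverlapSystem Set.univ 𝒞) (W : Finset V) :
    Orderable 𝒞 (W : Set V) := by
  induction W using Finset.strongInduction with | H W ih =>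
  have htrace : IsOverlapSystem W (trace 𝒞 W) := isOverlapSystem_trace h (Set.subset_univ _)
  refine (orderable_trace_iff subset_rfl).1
    (htrace.orderable_of_forall_ssubset (htrace.finite W.finite_toSet) fun W' hW' => ?_)
  lift W' to Finset V using W.finite_toSet.subset hW'.subset
  exact (orderable_trace_iff hW'.subset).2 (ih W' (Finset.coe_ssubset.1 hW'))

end IsOverlapSystem

/-! ### Infinite ground sets -/

theorem orderable_univ_of_forall_finset (h : ∀ W : Finset V, Orderable 𝒞 (W : Set V)) :
    Orderable 𝒞 Set.univ := by
  choose f hf using h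
  obtain ⟨F, hF⟩ : ∃ F : Ultrafilter (Finset V), (F : Filter (Finset V)) ≤ Filter.atTop :=
    ⟨_, Ultrafilter.of_le Filter.atTop⟩
  have eventually_mem (x) : ∀ᶠ W in (F : Filter (Finset V)), x ∈ W :=
    hF ((Filter.eventually_ge_atTop {x}).mono fun W => Finset.singleton_subset_iff.1)
  refine ⟨fun x y => ∀ᶠ W in F, f W x y, ?_⟩
  exact {
    trichotomous x y hxy hyx := by
      rw [← Ultrafilter.eventually_not] at hxy hyx
      obtain ⟨W, hxy, hyx⟩ := (hxy.and hyx).exists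
      exact (hf W).trichotomous x y hxy hyx
    irrefl x hx := by
      obtain ⟨W, hx⟩ := hx.exists
      exact (hf W).irrefl x hx
    trans x y z hxy hyz := (hxy.and hyz).mono fun W h => (hf W).trans x y z h.1 h.2
    interval S hS x hx y hy w _ hxw hwy := by
      obtain ⟨W, hxw, hwy, hxW, hyW, hwW⟩ := (hxw.and <| hwy.and <| (eventually_mem x).and <|
        (eventually_mem y).and (eventually_mem w)).exists
      exact (hf W).interval S hS x ⟨hx.1, hxW⟩ y ⟨hy.1, hyW⟩ w hwW hxw hwy }

end

theorem stmt_1_general (R : V → V → Set V) (htf : IsTransit R) (hm : IsMonotone R)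
    (hl1 : AxL1 R) (hl2 : AxL2 R) : IsPyramidal R := by
  have h : IsOverlapSystem Set.univ (transitSets R) := isOverlapSystem_transitSets htf hm hl1 hl2
  obtain ⟨lt, hlt⟩ := orderable_univ_of_forall_finset h.orderable_finset
  exact ⟨hm, lt, hlt.toIsStrictTotalOrder, fun u v x hx y hy w =>
    hlt.interval (R u v) ⟨u, v, rfl⟩ x ⟨hx, trivial⟩ y ⟨hy, trivial⟩ w trivial⟩

/-- A monotone transit function satisfying (l1) and (l2) is pyramidal. -/
theorem stmt_1 {V : Type*} [Fintype V] [Nonempty V] (R : V → V → Set V)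
    (htf : IsTransit R) (hm : IsMonotone R)
    (hl1 : AxL1 R) (hl2 : AxL2 R) :
    IsPyramidal R :=
  stmt_1_general R htf hm hl1 hl2

end TransitPaper
end

section
/- Every pyramidal transit function R on a finite nonempty set V satisfies axiom (hc). -/
namespace TransitPaper

variable {V : Type*}

/-!
Let `W` be finite, and let `x` be its least and `y` its greatest element in a compatible order. If
`u` lies between `x` and `v`, then `u` belongs to the interval `R x v`, so `R x u ⊆ R x v` by
monotonicity. Thus `R x` increases along `W` and, in the same way, `R y` decreases along it, so the
values of each form a chain.
-/

theorem isIntervalWrt_lt_iff_ordConnected [PartialOrder V] {S : Set V} :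
    IsIntervalWrt (· < ·) S ↔ S.OrdConnected := by
  refine ⟨fun hS => ⟨fun x hx y hy w hw => ?_⟩,
    fun hS x hx y hy w hxw hwy => hS.out hx hy ⟨hxw.le, hwy.le⟩⟩
  rcases hw.1.eq_or_lt with rfl | hxw
  · exact hx
  rcases hw.2.eq_or_lt with rfl | hwy
  · exact hy
  exact hS x hx y hy w hxw hwy

section Preorder

variable [Preorder V] {R : V → V → Set V}

theorem IsMonotone.monotoneOn_Ici (hR : IsMonotone R) (left_mem : ∀ u v, u ∈ R u v)
    (right_mem : ∀ u v, v ∈ R u v) (ordConnected : ∀ u v, (R u v).OrdConnected) (x : V) :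
    MonotoneOn (R x) (Set.Ici x) := fun u hu v _ huv =>
  have u_mem : u ∈ R x v := (ordConnected x v).out (left_mem x v) (right_mem x v) ⟨hu, huv⟩
  hR x v x u (left_mem x v) u_mem

theorem IsMonotone.antitoneOn_Iic (hR : IsMonotone R) (left_mem : ∀ u v, u ∈ R u v)
    (right_mem : ∀ u v, v ∈ R u v) (ordConnected : ∀ u v, (R u v).OrdConnected) (x : V) :
    AntitoneOn (R x) (Set.Iic x) := fun u _ v hv huv =>
  have v_mem : v ∈ R x u := (ordConnected x u).out (right_mem x u) (left_mem x u) ⟨huv, hv⟩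
  hR x u x v (left_mem x u) v_mem

end Preorder

theorem stmt_4_general {R : V → V → Set V} (left_mem : ∀ u v, u ∈ R u v)
    (right_mem : ∀ u v, v ∈ R u v) (hpy : IsPyramidal R) : AxHC R := by
  classical
  obtain ⟨hR, lt, hlt, hint⟩ := hpy
  let _ : LinearOrder V := linearOrderOfSTO lt
  have ordConnected (u v : V) : (R u v).OrdConnected :=
    isIntervalWrt_lt_iff_ordConnected.mp (hint u v)
  intro W hW
  have hne : W.Nonempty := Finset.card_pos.mp (by lia)
  have hmono := hR.monotoneOn_Ici left_mem right_mem ordConnected (W.min' hne)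
  have hanti := hR.antitoneOn_Iic left_mem right_mem ordConnected (W.max' hne)
  refine ⟨W.min' hne, W.min'_mem hne, W.max' hne, W.max'_mem hne,
    (W.min'_lt_max'_of_card (by lia)).ne, fun u hu v hv => ⟨?_, ?_⟩⟩
  · exact (le_total u v).imp (hmono (W.min'_le u hu) (W.min'_le v hv))
      (hmono (W.min'_le v hv) (W.min'_le u hu))
  · exact (le_total v u).imp (hanti (W.le_max' v hv) (W.le_max' u hu))
      (hanti (W.le_max' u hu) (W.le_max' v hv))

/-- Every pyramidal transit function satisfies (hc). -/
theorem stmt_4 {V : Type*} [Fintype V] [Nonempty V] (R : V → V → Set V)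
    (htf : IsTransit R) (hpy : IsPyramidal R) :
    AxHC R := by
  obtain ⟨left_mem, symm, -⟩ := htf
  exact stmt_4_general left_mem (fun u v => symm v u ▸ left_mem v u) hpy

end TransitPaper
end

section
/- Let R be a monotone transit function on a finite nonempty set V. Then the system of transit sets 𝒞_R is γ-acyclic if and only if 𝒞_R is a hierarchy. -/
/-!
If `A` and `B` overlap, with `a ∈ A \ B` and `b ∈ B \ A`, then `A`, `B` and any member through
`a` and `b` form a γ-triangle. Conversely, two of the sets of a γ-triangle overlap, and so do
consecutive sets of a cycle. Hence, as soon as any two points lie in a common member, γ-acyclic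
means overlap-free. In that case a maximal member `M` through a point `v` is the whole space: a
member through `v` and `z` meets `M`, so it is comparable to `M`, and `z ∈ M` by maximality.
-/

namespace TransitPaper

variable {V : Type*}

variable {A B : Set V} {𝒞 : Set (Set V)} {R : V → V → Set V}

theorem not_ovl_iff : ¬ Ovl A B ↔ A ⊆ B ∨ B ⊆ A ∨ A ∩ B = ∅ := by
  simp only [Ovl, Set.sdiff_nonempty, Set.nonempty_iff_ne_empty (s := A ∩ B)]
  tauto

theorem subset_or_subset_of_not_ovl (h : ¬ Ovl A B) (hAB : (A ∩ B).Nonempty) :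
    A ⊆ B ∨ B ⊆ A :=
  (or_assoc.2 (not_ovl_iff.1 h)).resolve_right hAB.ne_empty

/-- A set system is laminar if no two of its members overlap. This is the intersection condition
of a hierarchy, without the membership of the whole space and of the singletons. -/
def IsLaminar (𝒞 : Set (Set V)) : Prop :=
  ∀ A ∈ 𝒞, ∀ B ∈ 𝒞, ¬ Ovl A B

/-- A set system covers pairs if any two points, possibly equal, lie in a common member. Transit
sets do so by (t1) and (t2), and this supplies the third set of a γ-triangle. -/
def CoversPairs (𝒞 : Set (Set V)) : Prop :=
  ∀ a b, ∃ S ∈ 𝒞, a ∈ S ∧ b ∈ S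

theorem isHierarchy_iff_isLaminar :
    IsHierarchy 𝒞 ↔ Set.univ ∈ 𝒞 ∧ (∀ x, {x} ∈ 𝒞) ∧ IsLaminar 𝒞 := by
  simp only [IsHierarchy, IsLaminar, not_ovl_iff, Set.inter_eq_left, Set.inter_eq_right]

theorem HasPureCycle.hasWeakBetaCycle (h : HasPureCycle 𝒞) : HasWeakBetaCycle 𝒞 := by
  obtain ⟨n, hn, C, x, hC, hx, hx', -⟩ := h
  exact ⟨n, hn, C, x, hC, hx, hx'⟩

theorem ovl_of_weakBetaCycle {n : ℕ} (hn : 3 ≤ n) {C : ZMod n → Set V} {x : ZMod n → V}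
    (hx : ∀ i, x i ∈ C i ∧ x i ∈ C (i + 1))
    (hx' : ∀ i k : ZMod n, k ≠ i → k ≠ i + 1 → x i ∉ C k) (i : ZMod n) :
    Ovl (C i) (C (i + 1)) := by
  have : Fact (1 < n) := ⟨by omega⟩
  have two_ne_zero : (2 : ZMod n) ≠ 0 :=
    Ring.two_ne_zero (by rw [ZMod.ringChar_zmod_n]; omega)
  have left_mem : x (i - 1) ∈ C i := by simpa using (hx (i - 1)).2
  have left_notMem : x (i - 1) ∉ C (i + 1) :=
    hx' _ _ (fun h ↦ two_ne_zero (by linear_combination h)) (by simp)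
  have right_notMem : x (i + 1) ∉ C i :=
    hx' _ _ (by simp) (fun h ↦ two_ne_zero (by linear_combination -h))
  exact ⟨⟨x i, hx i⟩, ⟨x (i - 1), left_mem, left_notMem⟩, ⟨x (i + 1), (hx (i + 1)).1, right_notMem⟩⟩

theorem IsLaminar.totallyBalanced (h : IsLaminar 𝒞) : TotallyBalanced 𝒞 := by
  rintro ⟨n, hn, C, x, hC, hx, hx'⟩
  exact h _ (hC 0) _ (hC (0 + 1)) (ovl_of_weakBetaCycle hn hx hx' 0)

theorem IsLaminar.not_hasGammaTriangle (h : IsLaminar 𝒞) : ¬ HasGammaTriangle 𝒞 := by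
  rintro ⟨A, B, -, hA, hB, -, hAB, -, -, a, -, b, -, ha, hb⟩
  exact h A hA B hB ⟨hAB, ⟨a, ha⟩, ⟨b, hb⟩⟩

theorem IsLaminar.gammaAcyclic (h : IsLaminar 𝒞) : GammaAcyclic 𝒞 :=
  ⟨fun hcycle ↦ h.totallyBalanced hcycle.hasWeakBetaCycle, h.not_hasGammaTriangle⟩

theorem CoversPairs.isLaminar (hcov : CoversPairs 𝒞) (h : ¬ HasGammaTriangle 𝒞) :
    IsLaminar 𝒞 := by
  rintro A hA B hB ⟨hAB, ⟨a, ha⟩, ⟨b, hb⟩⟩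
  obtain ⟨S, hS, haS, hbS⟩ := hcov a b
  exact h ⟨A, B, S, hA, hB, hS, hAB, ⟨a, ha.1, haS⟩, ⟨b, hb.1, hbS⟩, a, haS, b, hbS, ha, hb⟩

theorem CoversPairs.gammaAcyclic_iff_isLaminar (hcov : CoversPairs 𝒞) :
    GammaAcyclic 𝒞 ↔ IsLaminar 𝒞 :=
  ⟨fun h ↦ hcov.isLaminar h.2, IsLaminar.gammaAcyclic⟩

theorem IsLaminar.univ_mem [Nonempty V] (h : IsLaminar 𝒞) (hfin : 𝒞.Finite)
    (hcov : CoversPairs 𝒞) : Set.univ ∈ 𝒞 := by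
  obtain ⟨v⟩ := ‹Nonempty V›
  obtain ⟨S, hS, hvS, -⟩ := hcov v v
  obtain ⟨M, hSM, hM⟩ := hfin.exists_le_maximal hS
  suffices M = Set.univ from this ▸ hM.prop
  refine Set.eq_univ_of_forall fun z ↦ ?_
  obtain ⟨T, hT, hvT, hzT⟩ := hcov v z
  have hTM : T ⊆ M :=
    (subset_or_subset_of_not_ovl (h M hM.prop T hT) ⟨v, hSM hvS, hvT⟩).elim
      (hM.le_of_ge hT) id
  exact hTM hzT

theorem IsTransit.coversPairs (hR : IsTransit R) : CoversPairs (transitSets R) :=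
  fun a b ↦ ⟨R a b, ⟨a, b, rfl⟩, hR.1 a b, hR.2.1 b a ▸ hR.1 b a⟩

theorem IsTransit.singleton_mem_transitSets (hR : IsTransit R) (x : V) :
    {x} ∈ transitSets R :=
  ⟨x, x, (hR.2.2 x).symm⟩

theorem stmt_6_general [Finite V] [Nonempty V] (hsingle : ∀ x, {x} ∈ 𝒞)
    (hcov : CoversPairs 𝒞) : GammaAcyclic 𝒞 ↔ IsHierarchy 𝒞 := by
  rw [hcov.gammaAcyclic_iff_isLaminar, isHierarchy_iff_isLaminar]
  exact ⟨fun h ↦ ⟨h.univ_mem 𝒞.toFinite hcov, hsingle, h⟩, fun h ↦ h.2.2⟩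

/-- For a monotone transit function, 𝒞_R is γ-acyclic iff 𝒞_R is
a hierarchy. -/
theorem stmt_6 {V : Type*} [Fintype V] [Nonempty V] (R : V → V → Set V)
    (htf : IsTransit R) (hm : IsMonotone R) :
    GammaAcyclic (transitSets R) ↔ IsHierarchy (transitSets R) :=
  stmt_6_general htf.singleton_mem_transitSets htf.coversPairs

end TransitPaper
end

section
/- Let R be a monotone transit function on a finite nonempty set V satisfying axiom (wp). Then R satisfies axiom (i). -/
namespace TransitPaper

variable {V : Type*}

theorem le_of_inf_le_of_le_sup {α : Type*} [DistribLattice α] {a b c : α}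
    (hinf : a ⊓ b ≤ c) (hsup : a ≤ b ⊔ c) : a ≤ c :=
  le_of_inf_le_sup_le (le_inf hinf inf_le_right) (sup_le (sup_comm b c ▸ hsup) le_sup_right)

theorem AxWPSet.axISet {𝒞 : Set (Set V)} (hwp : AxWPSet 𝒞) : AxISet 𝒞 := by
  intro A hA B hB C hC hAB hABC hC_diff
  have hAC : (A ∩ C).Nonempty := hAB.mono (Set.subset_inter Set.inter_subset_left hABC)
  have hBC : (B ∩ C).Nonempty := hAB.mono (Set.subset_inter Set.inter_subset_right hABC)
  rcases hwp A hA B hB C hC hAB hAC hBC with hA_cover | hB_cover | hC_cover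
  · exact Or.inl (le_of_inf_le_of_le_sup hABC hA_cover)
  · exact Or.inr (le_of_inf_le_of_le_sup (inf_comm A B ▸ hABC) hB_cover)
  · exact absurd hC_cover (Set.sdiff_nonempty.1 hC_diff)

theorem forall_mem_transitSets {R : V → V → Set V} {P : Set V → Prop} :
    (∀ S ∈ transitSets R, P S) ↔ ∀ x y, P (R x y) :=
  ⟨fun h x y => h _ ⟨x, y, rfl⟩, fun h _ ⟨x, y, hS⟩ => hS ▸ h x y⟩

theorem axWPSet_transitSets_iff {R : V → V → Set V} : AxWPSet (transitSets R) ↔ AxWP R := by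
  simp only [AxWPSet, AxWP, forall_mem_transitSets, Set.union_comm, or_comm, or_assoc]

theorem axISet_transitSets_iff {R : V → V → Set V} : AxISet (transitSets R) ↔ AxI R := by
  simp only [AxISet, AxI, forall_mem_transitSets]

theorem stmt_7_general (R : V → V → Set V) (hwp : AxWP R) : AxI R :=
  axISet_transitSets_iff.1 (axWPSet_transitSets_iff.2 hwp).axISet

/-- A monotone transit function satisfying (wp) satisfies (i). -/
theorem stmt_7 {V : Type*} [Fintype V] [Nonempty V] (R : V → V → Set V)
    (htf : IsTransit R) (hm : IsMonotone R) (hwp : AxWP R) :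
    AxI R :=
  stmt_7_general R hwp

end TransitPaper
end
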